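/- (Effectiveness of latent-class separability.) In the Gaussian neighborhood model, let w, w' ∈ [0,1] and suppose that either n₀ = n, or both w and w' lie in the interval [max((n−2n₀)/(2n−2n₀), 0), 1]. Then CS(w) > CS(w') if and only if LCS(w) > LCS(w'). -/

import Mathlib

/-!
Both separabilities are strictly increasing functions of the signal-to-noise ratio
`|m(w)| / √v(w)`. For the latent-class separability this is immediate, since
`LCS(w) = 4 m(w)² / v(w)` (`LCS_eq`). For the class separability, the Bayes rule between
`N(m, v)` and `N(-m, v)` with `m ≥ 0` is the half-line `[0, ∞)`, because the first density
is at least the second there and at most the second on the complement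
(`gaussianPDF_neg_mean_le`, `gaussianSep_of_nonneg`). By the
reflection `x ↦ -x` both classes are classified correctly with the same probability, which after
standardization is the standard normal mass of `[-|m| / √v, ∞)` (`gaussianSep_eq`). The normal law
charges every nonempty open interval, so this mass is strictly increasing in `|m| / √v`.

The supremum over all `A` makes the class separability blind to the sign of `m(w)`
(`gaussianSep_neg`), which is why only `|m(w)|` enters.
-/

open MeasureTheory ProbabilityTheory
open scoped ENNReal NNReal

/-- Mean `m(w) = μ·(1 − 2w(n−n₀)/n)` of the class-`C₀` embedding in the Gaussian
neighborhood model. -/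
noncomputable def mW (μ : ℝ) (n n₀ : ℕ) (w : ℝ) : ℝ :=
  μ * (1 - 2 * w * ((n : ℝ) - n₀) / n)

/-- Variance `v(w) = σ²·((1−w)² + w²/n)` of the embedding in the Gaussian
neighborhood model. -/
noncomputable def vW (σ : ℝ) (n : ℕ) (w : ℝ) : ℝ :=
  σ ^ 2 * ((1 - w) ^ 2 + w ^ 2 / n)

/-- Class-conditional embedding law `P₀(w) = N(m(w), v(w))` of a class-`C₀` node. -/
noncomputable def P0 (μ σ : ℝ) (n n₀ : ℕ) (w : ℝ) : Measure ℝ :=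
  gaussianReal (mW μ n n₀ w) (Real.toNNReal (vW σ n w))

/-- Class-conditional embedding law `P₁(w) = N(−m(w), v(w))` of a class-`C₁` node. -/
noncomputable def P1 (μ σ : ℝ) (n n₀ : ℕ) (w : ℝ) : Measure ℝ :=
  gaussianReal (-(mW μ n n₀ w)) (Real.toNNReal (vW σ n w))

/-- Class separability: one minus the Bayes error rate of the Bayes classifier
for equal class priors, i.e. the supremum over measurable sets `A ⊆ ℝ` of
`½·P₀(w)(A) + ½·P₁(w)(Aᶜ)`. -/
noncomputable def CS (μ σ : ℝ) (n n₀ : ℕ) (w : ℝ) : ℝ≥0∞ :=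
  ⨆ (A : Set ℝ) (_ : MeasurableSet A),
    (1 / 2 : ℝ≥0∞) * P0 μ σ n n₀ w A + (1 / 2 : ℝ≥0∞) * P1 μ σ n n₀ w Aᶜ

/-- Latent-class separability: the two-class Calinski–Harabasz-type index
`LCS(w) = (E_{P₀(w)}[x] − E_{P₁(w)}[x])² / (½·(Var_{P₀(w)}(x) + Var_{P₁(w)}(x)))`. -/
noncomputable def LCS (μ σ : ℝ) (n n₀ : ℕ) (w : ℝ) : ℝ :=
  ((∫ x, x ∂(P0 μ σ n n₀ w)) - ∫ x, x ∂(P1 μ σ n n₀ w)) ^ 2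
    / ((variance id (P0 μ σ n n₀ w) + variance id (P1 μ σ n n₀ w)) / 2)

/-- The class separability, for equal priors, of the laws `N(m, v)` and `N(-m, v)`. -/
noncomputable def gaussianSep (m : ℝ) (v : ℝ≥0) : ℝ≥0∞ :=
  ⨆ (A : Set ℝ) (_ : MeasurableSet A),
    (1 / 2 : ℝ≥0∞) * gaussianReal m v A + (1 / 2 : ℝ≥0∞) * gaussianReal (-m) v Aᶜ

/-- Exchanging the two classes replaces a decision region by its complement. -/
lemma gaussianSep_neg (m : ℝ) (v : ℝ≥0) : gaussianSep (-m) v = gaussianSep m v := by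
  have key : ∀ a : ℝ, gaussianSep (-a) v ≤ gaussianSep a v := fun a => by
    refine iSup₂_le fun A hA => le_iSup₂_of_le Aᶜ hA.compl ?_
    rw [neg_neg, compl_compl, add_comm]
  exact le_antisymm (key m) (by simpa using key (-m))

lemma gaussianPDF_neg_mean_le {m : ℝ} (v : ℝ≥0) {x : ℝ} (h : 0 ≤ m * x) :
    gaussianPDF (-m) v x ≤ gaussianPDF m v x := by
  unfold gaussianPDF gaussianPDFReal
  refine ENNReal.ofReal_le_ofReal ?_
  have h2 : (x - m) ^ 2 ≤ (x - -m) ^ 2 := by nlinarith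
  gcongr _ * Real.exp (-?_ / _)

/-- Every set on which `m * x` is nonnegative is at least as likely under `N(m, v)` as under
`N(-m, v)`. -/
lemma gaussianReal_neg_mean_le {m : ℝ} {v : ℝ≥0} (hv : v ≠ 0) {B : Set ℝ}
    (h : ∀ x ∈ B, 0 ≤ m * x) : gaussianReal (-m) v B ≤ gaussianReal m v B := by
  rw [gaussianReal_apply _ hv, gaussianReal_apply _ hv]
  exact setLIntegral_mono (by fun_prop) fun x hx => gaussianPDF_neg_mean_le v (h x hx)

lemma gaussianReal_neg_Iio {m : ℝ} {v : ℝ≥0} (hv : v ≠ 0) :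
    gaussianReal (-m) v (Set.Iio 0) = gaussianReal m v (Set.Ici 0) := by
  have := nullSingletonClass_gaussianReal (μ := m) hv
  rw [← gaussianReal_map_neg, Measure.map_apply measurable_neg measurableSet_Iio]
  simpa using measure_congr (Ioi_ae_eq_Ici (μ := gaussianReal m v) (a := (0 : ℝ)))

/-- For `m ≥ 0` the half-line `[0, ∞)` is an optimal decision region, and it classifies both
classes correctly with the same probability. -/
lemma gaussianSep_of_nonneg {m : ℝ} (hm : 0 ≤ m) {v : ℝ≥0} (hv : v ≠ 0) :
    gaussianSep m v = gaussianReal m v (Set.Ici 0) := by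
  have hS : MeasurableSet (Set.Ici (0 : ℝ)) := measurableSet_Ici
  have hval : (1 / 2 : ℝ≥0∞) * gaussianReal m v (Set.Ici 0)
      + (1 / 2 : ℝ≥0∞) * gaussianReal (-m) v (Set.Ici 0)ᶜ = gaussianReal m v (Set.Ici 0) := by
    rw [Set.compl_Ici, gaussianReal_neg_Iio hv, ← add_mul, ENNReal.add_halves, one_mul]
  refine le_antisymm (iSup₂_le fun A hA => ?_) (le_iSup₂_of_le _ hS hval.ge)
  rw [← hval, ← mul_add, ← mul_add]
  refine mul_le_mul_right ?_ _
  -- `A` and `[0, ∞)` disagree on two pieces; on each, the half-line picks the likelier class.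
  have h1 : gaussianReal m v (A \ Set.Ici 0) ≤ gaussianReal (-m) v (A \ Set.Ici 0) := by
    have := gaussianReal_neg_mean_le (m := -m) hv (B := A \ Set.Ici 0) fun x hx => by
      have : x < 0 := not_le.1 hx.2
      nlinarith
    rwa [neg_neg] at this
  have h2 : gaussianReal (-m) v (Set.Ici 0 \ A) ≤ gaussianReal m v (Set.Ici 0 \ A) :=
    gaussianReal_neg_mean_le hv fun x hx => mul_nonneg hm hx.1
  have e2 : Aᶜ ∩ Set.Ici 0 = Set.Ici 0 \ A := by rw [Set.inter_comm, Set.sdiff_eq]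
  have e3 : (Set.Ici (0 : ℝ))ᶜ ∩ A = A \ Set.Ici 0 := by rw [Set.inter_comm, Set.sdiff_eq]
  have e4 : (Set.Ici (0 : ℝ))ᶜ \ A = Aᶜ \ Set.Ici 0 := by
    rw [Set.sdiff_eq, Set.sdiff_eq, Set.inter_comm]
  rw [← measure_inter_add_sdiff (μ := gaussianReal m v) A hS,
    ← measure_inter_add_sdiff (μ := gaussianReal (-m) v) Aᶜ hS,
    ← measure_inter_add_sdiff (μ := gaussianReal m v) (Set.Ici 0) hA,
    ← measure_inter_add_sdiff (μ := gaussianReal (-m) v) (Set.Ici 0)ᶜ hA,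
    e2, e3, e4, Set.inter_comm (Set.Ici 0) A]
  calc _ ≤ _ := add_le_add (add_le_add le_rfl h1) (add_le_add h2 le_rfl)
    _ = _ := by ring

lemma gaussianReal_Ici_zero (m : ℝ) {v : ℝ≥0} (hv : v ≠ 0) :
    gaussianReal m v (Set.Ici 0) = gaussianReal 0 1 (Set.Ici (-(m / √(v : ℝ)))) := by
  have hs : 0 < √(v : ℝ) := Real.sqrt_pos.2 (by positivity)
  have hmap : gaussianReal m v = (gaussianReal 0 1).map (fun x => √(v : ℝ) * x + m) := by
    rw [← Function.comp_def (· + m) (√(v : ℝ) * ·), ← Measure.map_map (by fun_prop) (by fun_prop),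
      gaussianReal_map_const_mul, gaussianReal_map_add_const]
    congr 1
    · simp
    · ext
      simp
  rw [hmap, Measure.map_apply (by fun_prop) measurableSet_Ici]
  congr 1
  ext x
  rw [Set.mem_preimage, Set.mem_Ici, Set.mem_Ici, ← neg_div, div_le_iff₀ hs, mul_comm x]
  exact neg_le_iff_add_nonneg.symm

lemma gaussianSep_eq (m : ℝ) {v : ℝ≥0} (hv : v ≠ 0) :
    gaussianSep m v = gaussianReal 0 1 (Set.Ici (-(|m| / √(v : ℝ)))) := by
  rw [← gaussianReal_Ici_zero _ hv, ← gaussianSep_of_nonneg (abs_nonneg m) hv]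
  rcases abs_choice m with h | h <;> rw [h]
  rw [gaussianSep_neg]

lemma strictMono_gaussianReal_Ici_neg :
    StrictMono fun t : ℝ => gaussianReal 0 1 (Set.Ici (-t)) := fun a b hab => by
  have hpos : gaussianReal 0 1 (Set.Ico (-b) (-a)) ≠ 0 := fun h0 => by
    have := gaussianReal_absolutelyContinuous' 0 one_ne_zero h0
    rw [Real.volume_Ico, ENNReal.ofReal_eq_zero] at this
    linarith
  have hd : Disjoint (Set.Ico (-b) (-a)) (Set.Ici (-a)) :=
    Set.disjoint_left.2 fun x hx hx' => hx.2.not_ge hx'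
  dsimp only
  rw [← Set.Ico_union_Ici_eq_Ici (neg_le_neg hab.le), measure_union hd measurableSet_Ici, add_comm]
  exact ENNReal.lt_add_right (measure_ne_top _ _) hpos

/-- The two summands of `vW` never vanish together: `(1-w)²` vanishes only at `w = 1`, where
`w²/n` is positive because `n ≥ 1`. -/
lemma vW_pos {σ : ℝ} (hσ : 0 < σ) {n : ℕ} (hn : 1 ≤ n) (w : ℝ) : 0 < vW σ n w := by
  have hn' : (0 : ℝ) < n := by exact_mod_cast hn
  refine mul_pos (by positivity) ?_
  rcases eq_or_ne w 0 with rfl | h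
  · simp
  · positivity

lemma LCS_eq (μ σ : ℝ) (n n₀ : ℕ) {w : ℝ} (hv : 0 < vW σ n w) :
    LCS μ σ n n₀ w = 4 * (|mW μ n n₀ w| / √(vW σ n w)) ^ 2 := by
  rw [div_pow, sq_abs, Real.sq_sqrt hv.le]
  simp only [LCS, P0, P1, integral_id_gaussianReal, variance_id_gaussianReal,
    Real.coe_toNNReal _ hv.le]
  ring

lemma CS_eq (μ σ : ℝ) (n n₀ : ℕ) {w : ℝ} (hv : 0 < vW σ n w) :
    CS μ σ n n₀ w = gaussianReal 0 1 (Set.Ici (-(|mW μ n n₀ w| / √(vW σ n w)))) := by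
  have h := gaussianSep_eq (mW μ n n₀ w) (Real.toNNReal_pos.2 hv).ne'
  rwa [Real.coe_toNNReal _ hv.le] at h

/-- **Effectiveness of latent-class separability.** In the
Gaussian neighborhood model, let `w, w' ∈ [0,1]` and suppose that either
`n₀ = n`, or both `w` and `w'` lie in the interval
`[max((n−2n₀)/(2n−2n₀), 0), 1]`.  Then `CS(w) > CS(w')` if and only if
`LCS(w) > LCS(w')`. -/
theorem CS_gt_iff_LCS_gt (μ σ : ℝ) (hμ : μ ≠ 0) (hσ : 0 < σ)
    (n n₀ : ℕ) (hn : 1 ≤ n) (hn₀ : n₀ ≤ n)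
    (w w' : ℝ) (hw : w ∈ Set.Icc (0 : ℝ) 1) (hw' : w' ∈ Set.Icc (0 : ℝ) 1)
    (hcond : n₀ = n ∨
      (w ∈ Set.Icc (max (((n : ℝ) - 2 * n₀) / (2 * (n : ℝ) - 2 * n₀)) 0) 1 ∧
       w' ∈ Set.Icc (max (((n : ℝ) - 2 * n₀) / (2 * (n : ℝ) - 2 * n₀)) 0) 1)) :
    CS μ σ n n₀ w > CS μ σ n n₀ w' ↔ LCS μ σ n n₀ w > LCS μ σ n n₀ w' := by
  have hv := vW_pos hσ hn w
  have hv' := vW_pos hσ hn w'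
  rw [CS_eq μ σ n n₀ hv, CS_eq μ σ n n₀ hv', LCS_eq μ σ n n₀ hv, LCS_eq μ σ n n₀ hv', gt_iff_lt,
    gt_iff_lt, strictMono_gaussianReal_Ici_neg.lt_iff_lt, mul_lt_mul_iff_right₀ four_pos,
    sq_lt_sq₀ (by positivity) (by positivity)]
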